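/- For every n ≥ 4, the fan F_n = K_1 ∨ P_{n-1} and the wheel W_n = K_1 ∨ C_{n-1} satisfy γ_MR(F_n) = γ_MR(W_n). -/

import Mathlib

open Finset

namespace MRD

variable {V : Type*}

open scoped Classical

/-- Sum of `f` over the closed neighborhood of `v` in `G`:
`f(N[v]) = \sum_{u \in N[v]} f(u)`. -/
noncomputable def closedNbhdSum [Fintype V] (G : SimpleGraph V) (f : V → ℤ) (v : V) : ℤ :=
  ∑ u ∈ Finset.univ.filter (fun u => G.Adj v u ∨ u = v), f u

/-- `f : V → {-1, 1, 2}` is a Majority Roman Dominating Function (MRDF) on `G`: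
(i) `f(N[v]) ≥ 1` for at least half of the vertices, and (ii) every vertex with value `-1`
is adjacent to a vertex with value `2`. -/
noncomputable def IsMRDF [Fintype V] (G : SimpleGraph V) (f : V → ℤ) : Prop :=
  (∀ v, f v = -1 ∨ f v = 1 ∨ f v = 2) ∧
  Fintype.card V ≤ 2 * (Finset.univ.filter (fun v => 1 ≤ closedNbhdSum G f v)).card ∧
  (∀ u, f u = -1 → ∃ w, G.Adj u w ∧ f w = 2)

/-- The majority Roman domination number `γ_MR(G)`: the minimum weight
`w(f) = ∑_v f(v)` over all MRDFs `f` on `G`. -/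
noncomputable def mrdNum [Fintype V] (G : SimpleGraph V) : ℤ :=
  sInf {w : ℤ | ∃ f : V → ℤ, IsMRDF G f ∧ w = ∑ v, f v}

/-- The join `G ∨ H` of two simple graphs: disjoint union plus all edges between the parts. -/
def join {α β : Type*} (G : SimpleGraph α) (H : SimpleGraph β) : SimpleGraph (α ⊕ β) where
  Adj x y :=
    match x, y with
    | .inl a, .inl b => G.Adj a b
    | .inr a, .inr b => H.Adj a b
    | .inl _, .inr _ => True
    | .inr _, .inl _ => True
  symm := by constructor; rintro (a | a) (b | b) h <;> simp_all [SimpleGraph.adj_comm]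
  loopless := by constructor; rintro (a | a) h <;> simp_all

/-- The corona `G ∘ H` of two simple graphs: one copy of `G` and `|V(G)|` copies of `H`,
where the `v`-th vertex of `G` is joined to every vertex of the `v`-th copy of `H`. -/
def corona {α β : Type*} (G : SimpleGraph α) (H : SimpleGraph β) : SimpleGraph (α ⊕ α × β) where
  Adj x y :=
    match x, y with
    | .inl u, .inl v => G.Adj u v
    | .inr p, .inr q => p.1 = q.1 ∧ H.Adj p.2 q.2
    | .inl u, .inr p => u = p.1
    | .inr p, .inl u => u = p.1
  symm := by
    constructor
    rintro (u | ⟨u, x⟩) (v | ⟨v, y⟩) h <;> simp_all [SimpleGraph.adj_comm, eq_comm]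
  loopless := by constructor; rintro (u | ⟨u, x⟩) h <;> simp_all

/-- `S` is a dominating set of `G`. -/
def IsDomSet (G : SimpleGraph V) (S : Finset V) : Prop :=
  ∀ v, v ∉ S → ∃ u ∈ S, G.Adj v u

/-- The domination number `γ(G)`. -/
noncomputable def domNum [Fintype V] (G : SimpleGraph V) : ℕ :=
  sInf {k | ∃ S : Finset V, IsDomSet G S ∧ S.card = k}

/-- A set of vertices is independent if no two of its vertices are adjacent. -/
def IsIndepSet (G : SimpleGraph V) (S : Finset V) : Prop :=
  ∀ a ∈ S, ∀ b ∈ S, ¬ G.Adj a b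

/-- The independence number `β₀(G)`. -/
noncomputable def indepNum [Fintype V] (G : SimpleGraph V) : ℕ :=
  sSup {k | ∃ S : Finset V, IsIndepSet G S ∧ S.card = k}

/-- The cocktail party graph `K_{2n} - M` (complete graph minus a perfect matching),
realized on `Fin n × Fin 2`: `(i,a)` and `(j,b)` are adjacent iff `i ≠ j`. -/
def cocktail (n : ℕ) : SimpleGraph (Fin n × Fin 2) where
  Adj x y := x.1 ≠ y.1
  symm := ⟨fun _ _ h => h.symm⟩
  loopless := ⟨fun _ h => h rfl⟩

end MRD

/-!
The fan and the wheel are both cones `K₁ ∨ H` over a graph `H` on `m = n - 1 ≥ 3` vertices which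
has maximum degree at most `2` and contains a Hamiltonian path, and for every such `H`
`γ_MR(K₁ ∨ H) = 2 - m + 2 ⌈(m + 1) / 6⌉`.

The neighborhood sum at the apex is the weight, so for an MRDF of weight at most `0` at least
`(m + 1) / 2` vertices of `H` must satisfy the neighborhood condition. If the apex has value `2`,
such a vertex cannot have `-1` on its whole closed neighborhood in `H`, so it is dominated by the
vertices of `H` with positive value. Each of these dominates at most three vertices, so there are
at least `(m + 1) / 6` of them. If the apex does not have value `2`, each `-1` on `H` needs a `2`
next to it in `H`, and letting every `2` send one unit to each adjacent `-1` shows that the weight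
is too large. The bound is attained by `2` on the apex, `1` on the middle vertices of
`⌈(m + 1) / 6⌉` consecutive triples of the path, and `-1` elsewhere.
-/

namespace MRD

section General

variable {V : Type*} [Fintype V] {G : SimpleGraph V} {f : V → ℤ}

theorem isMRDF_one (G : SimpleGraph V) : IsMRDF G 1 := by
  have one_le_closedNbhdSum (v : V) : 1 ≤ closedNbhdSum G 1 v := by
    simp only [closedNbhdSum, Pi.one_apply, sum_const, nsmul_eq_mul, mul_one]
    exact_mod_cast card_pos.mpr ⟨v, by simp⟩
  refine ⟨by simp, ?_, by simp⟩
  rw [filter_true_of_mem fun v _ => one_le_closedNbhdSum v, card_univ]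
  omega

theorem IsMRDF.neg_card_le_sum (hf : IsMRDF G f) : -(Fintype.card V : ℤ) ≤ ∑ v, f v := by
  have neg_one_le (v : V) : -1 ≤ f v := by
    have := hf.1 v
    omega
  simpa using card_nsmul_le_sum univ f (-1) fun v _ => neg_one_le v

theorem mrdNum_le_sum (hf : IsMRDF G f) : mrdNum G ≤ ∑ v, f v := by
  refine csInf_le ⟨-(Fintype.card V : ℤ), ?_⟩ ⟨f, hf, rfl⟩
  rintro _ ⟨h, hh, rfl⟩
  exact hh.neg_card_le_sum

theorem le_mrdNum {c : ℤ} (hc : ∀ f, IsMRDF G f → c ≤ ∑ v, f v) : c ≤ mrdNum G := by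
  refine le_csInf ⟨_, 1, isMRDF_one G, rfl⟩ ?_
  rintro _ ⟨f, hf, rfl⟩
  exact hc f hf

theorem sum_add_card_eq_card_filter (hf : ∀ v, f v = -1 ∨ f v = 1 ∨ f v = 2) :
    ∑ v, f v + Fintype.card V = 2 * #{v | f v ≠ -1} + #{v | f v = 2} := by
  have pointwise (v : V) :
      f v + 1 = 2 * (if f v ≠ -1 then 1 else 0) + (if f v = 2 then 1 else 0) := by
    rcases hf v with h | h | h <;> simp [h]
  calc ∑ v, f v + Fintype.card V = ∑ v, (f v + 1) := by simp [sum_add_distrib]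
    _ = 2 * #{v | f v ≠ -1} + #{v | f v = 2} := by
      simp only [pointwise, sum_add_distrib, ← mul_sum, sum_boole]

end General

section ClosedNeighborhood

variable {V : Type*} [Fintype V]

open Classical in
/-- The closed neighborhood `N[v]`, in the form in which it occurs in `closedNbhdSum`. -/
noncomputable def closedNbhd (H : SimpleGraph V) (v : V) : Finset V := {u | H.Adj v u ∨ u = v}

open Classical in
/-- The set `N[S]` of vertices dominated by `S`, i.e. the union of the closed neighborhoods of the
elements of `S`. -/
noncomputable def dominated (H : SimpleGraph V) (S : Finset V) : Finset V :=
  S.biUnion (closedNbhd H)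

variable {H : SimpleGraph V} {g : V → ℤ} {S : Finset V} {u v : V}

theorem closedNbhdSum_eq_sum : closedNbhdSum H g v = ∑ u ∈ closedNbhd H v, g u := rfl

theorem mem_closedNbhd : u ∈ closedNbhd H v ↔ H.Adj v u ∨ u = v := by
  simp [closedNbhd]

theorem mem_closedNbhd_comm : u ∈ closedNbhd H v ↔ v ∈ closedNbhd H u := by
  simp only [mem_closedNbhd, H.adj_comm, eq_comm]

theorem mem_dominated : v ∈ dominated H S ↔ ∃ u ∈ S, u ∈ closedNbhd H v := by
  simp only [dominated, mem_biUnion, mem_closedNbhd_comm (u := v)]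

theorem dominated_mono {H' : SimpleGraph V} (hle : H ≤ H') : dominated H S ⊆ dominated H' S := by
  intro v
  simp only [mem_dominated, mem_closedNbhd]
  exact fun ⟨u, hu, hvu⟩ => ⟨u, hu, hvu.imp_left (hle ·)⟩

variable [H.LocallyFinite]

theorem closedNbhd_eq_insert [DecidableEq V] : closedNbhd H v = insert v (H.neighborFinset v) := by
  ext u
  simp [mem_closedNbhd, or_comm]

theorem closedNbhdSum_eq_add : closedNbhdSum H g v = g v + ∑ u ∈ H.neighborFinset v, g u := by
  classical
  rw [closedNbhdSum_eq_sum, closedNbhd_eq_insert, sum_insert (H.notMem_neighborFinset_self v)]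

theorem card_closedNbhd : #(closedNbhd H v) = H.degree v + 1 := by
  classical
  rw [closedNbhd_eq_insert, card_insert_of_notMem (H.notMem_neighborFinset_self v),
    H.card_neighborFinset_eq_degree]

theorem card_dominated_le {d : ℕ} (hdeg : ∀ v, H.degree v ≤ d) :
    #(dominated H S) ≤ #S * (d + 1) := by
  classical
  exact card_biUnion_le_card_mul _ _ _ fun v _ => by simpa [card_closedNbhd] using hdeg v

theorem sub_degree_le_closedNbhdSum (hg : ∀ v, -1 ≤ g v) (hu : u ∈ closedNbhd H v) :
    g u - H.degree v ≤ closedNbhdSum H g v := by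
  classical
  have rest : -(#((closedNbhd H v).erase u) : ℤ) ≤ ∑ w ∈ (closedNbhd H v).erase u, g w := by
    simpa using card_nsmul_le_sum _ g (-1) fun w _ => hg w
  have total : g u + ∑ w ∈ (closedNbhd H v).erase u, g w = closedNbhdSum H g v :=
    add_sum_erase _ _ hu
  rw [card_erase_of_mem hu, card_closedNbhd, Nat.add_sub_cancel] at rest
  linarith

theorem closedNbhdSum_eq_of_notMem_dominated (hv : v ∉ dominated H {u | g u ≠ -1}) :
    closedNbhdSum H g v = -(H.degree v + 1) := by
  have eq_neg_one : ∀ u ∈ closedNbhd H v, g u = -1 := by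
    simpa [mem_dominated, imp_not_comm] using hv
  calc closedNbhdSum H g v = ∑ u ∈ closedNbhd H v, (-1) := sum_congr rfl eq_neg_one
    _ = -(H.degree v + 1) := by simp [card_closedNbhd]

end ClosedNeighborhood

section Discharging

variable {V : Type*}

/-- A Roman labelling: values in `{-1, 1, 2}`, with every `-1` adjacent to a `2`. This is an MRDF
without the majority condition. -/
def IsRomanLabelling (H : SimpleGraph V) (g : V → ℤ) : Prop :=
  (∀ v, g v = -1 ∨ g v = 1 ∨ g v = 2) ∧ ∀ u, g u = -1 → ∃ w, H.Adj u w ∧ g w = 2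

/-- The charge received across an edge by an endpoint of value `a` from one of value `b`: each
`2` sends one unit to each adjacent `-1`. -/
def transfer (a b : ℤ) : ℤ :=
  if a = -1 ∧ b = 2 then 1 else if a = 2 ∧ b = -1 then -1 else 0

theorem transfer_antisymm (a b : ℤ) : transfer a b = -transfer b a := by
  unfold transfer
  split_ifs <;> omega

theorem transfer_neg_one_nonneg (b : ℤ) : 0 ≤ transfer (-1) b := by
  simp only [transfer, true_and]
  split_ifs <;> simp_all

theorem neg_one_le_transfer (a b : ℤ) : -1 ≤ transfer a b := by
  unfold transfer
  split_ifs <;> omega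

/-- The charge of `v` after discharging: its value under `g`, plus what it receives from its
neighbors. -/
def charge (H : SimpleGraph V) [H.LocallyFinite] (g : V → ℤ) (v : V) : ℤ :=
  g v + ∑ u ∈ H.neighborFinset v, transfer (g v) (g u)

variable {H : SimpleGraph V} [H.LocallyFinite] {g : V → ℤ} {v : V}

theorem sum_charge [Fintype V] : ∑ v, charge H g v = ∑ v, g v := by
  set T := ∑ v, ∑ u ∈ H.neighborFinset v, transfer (g v) (g u)
  have antisymm : T = -T := by
    calc T = ∑ u, ∑ v ∈ H.neighborFinset u, transfer (g v) (g u) :=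
        sum_comm' fun v u => by simp [H.adj_comm]
      _ = ∑ u, ∑ v ∈ H.neighborFinset u, -transfer (g u) (g v) :=
        sum_congr rfl fun u _ => sum_congr rfl fun v _ => transfer_antisymm _ _
      _ = -T := by simp only [sum_neg_distrib, T]
  have : T = 0 := by omega
  simp only [charge, sum_add_distrib]
  omega

theorem IsRomanLabelling.charge_nonneg (hg : IsRomanLabelling H g) (hdeg : H.degree v ≤ 2) :
    0 ≤ charge H g v := by
  unfold charge
  rcases hg.1 v with h | h | h <;> rw [h]
  · obtain ⟨w, hvw, hw⟩ := hg.2 v h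
    have : 1 ≤ ∑ u ∈ H.neighborFinset v, transfer (-1) (g u) := by
      calc 1 = transfer (-1) (g w) := by simp [transfer, hw]
        _ ≤ _ := single_le_sum (f := fun u => transfer (-1) (g u))
          (fun u _ => transfer_neg_one_nonneg _) ((H.mem_neighborFinset v w).mpr hvw)
    omega
  · simp [transfer]
  · have : -(H.degree v : ℤ) ≤ ∑ u ∈ H.neighborFinset v, transfer 2 (g u) := by
      simpa using card_nsmul_le_sum (H.neighborFinset v) (fun u => transfer 2 (g u)) (-1)
        fun u _ => neg_one_le_transfer _ _
    omega

-- If no charge is positive, all are zero, so the value `1` does not occur; between the two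
-- remaining values, the transfer to `v` from `u` is `(g u - g v) / 3`.
theorem IsRomanLabelling.exists_charge_pos [Fintype V] (hg : IsRomanLabelling H g)
    (hdeg : ∀ v, H.degree v ≤ 2) (hv : 2 ≤ closedNbhdSum H g v) : ∃ w, 0 < charge H g w := by
  by_contra! hle
  have charge_eq (w : V) : charge H g w = 0 := (hle w).antisymm (hg.charge_nonneg (hdeg w))
  have ne_one (w : V) : g w ≠ 1 := fun h => by simpa [charge, transfer, h] using charge_eq w
  have eq_add_transfer (u : V) : g u = g v + 3 * transfer (g v) (g u) := by
    have := hg.1 u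
    have := hg.1 v
    have := ne_one u
    have := ne_one v
    unfold transfer
    split_ifs <;> omega
  have closedNbhdSum_eq : closedNbhdSum H g v = (H.degree v - 2) * g v := by
    have hcharge := charge_eq v
    have hsum : ∑ u ∈ H.neighborFinset v, g u =
        H.degree v * g v + 3 * ∑ u ∈ H.neighborFinset v, transfer (g v) (g u) := by
      rw [sum_congr rfl fun u _ => eq_add_transfer u]
      simp [sum_add_distrib, mul_sum]
    unfold charge at hcharge
    rw [closedNbhdSum_eq_add, hsum]
    linear_combination 3 * hcharge
  have hdegv := hdeg v
  rcases hg.1 v with h | h | h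
  · obtain ⟨w, hvw, -⟩ := hg.2 v h
    have : 0 < H.degree v := (H.degree_pos_iff_exists_adj v).mpr ⟨w, hvw⟩
    rw [h] at closedNbhdSum_eq
    omega
  · exact ne_one v h
  · rw [h] at closedNbhdSum_eq
    omega

variable [Fintype V]

theorem IsRomanLabelling.sum_nonneg (hg : IsRomanLabelling H g) (hdeg : ∀ v, H.degree v ≤ 2) :
    0 ≤ ∑ v, g v :=
  sum_charge (H := H) (g := g) ▸ Finset.sum_nonneg fun v _ => hg.charge_nonneg (hdeg v)

theorem IsRomanLabelling.sum_pos (hg : IsRomanLabelling H g) (hdeg : ∀ v, H.degree v ≤ 2)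
    (hv : 2 ≤ closedNbhdSum H g v) : 0 < ∑ v, g v := by
  obtain ⟨w, hw⟩ := hg.exists_charge_pos hdeg hv
  rw [← sum_charge (H := H)]
  exact sum_pos' (fun v _ => hg.charge_nonneg (hdeg v)) ⟨w, mem_univ w, hw⟩

end Discharging

section Join

variable {α β : Type*} [Fintype α] [Fintype β] (G : SimpleGraph α) (H : SimpleGraph β)
  (f : α ⊕ β → ℤ)

theorem closedNbhd_join_inl (a : α) :
    closedNbhd (join G H) (.inl a) = (closedNbhd G a).disjSum univ := by
  ext (u | u) <;> simp [mem_closedNbhd, join]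

theorem closedNbhd_join_inr (b : β) :
    closedNbhd (join G H) (.inr b) = univ.disjSum (closedNbhd H b) := by
  ext (u | u) <;> simp [mem_closedNbhd, join]

theorem closedNbhdSum_join_inl (a : α) :
    closedNbhdSum (join G H) f (.inl a) = closedNbhdSum G (f ∘ .inl) a + ∑ b, f (.inr b) := by
  rw [closedNbhdSum_eq_sum, closedNbhd_join_inl, sum_disjSum, closedNbhdSum_eq_sum]
  rfl

theorem closedNbhdSum_join_inr (b : β) :
    closedNbhdSum (join G H) f (.inr b) = ∑ a, f (.inl a) + closedNbhdSum H (f ∘ .inr) b := by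
  rw [closedNbhdSum_eq_sum, closedNbhd_join_inr, sum_disjSum, closedNbhdSum_eq_sum]
  rfl

end Join

section Cone

variable {V : Type*}

/-- The cone `K₁ ∨ H`, whose apex is `Sum.inl 0`. -/
abbrev cone (H : SimpleGraph V) : SimpleGraph (Fin 1 ⊕ V) := join ⊤ H

variable {H : SimpleGraph V} {f : Fin 1 ⊕ V → ℤ}

theorem adj_cone_apex (v : V) : (cone H).Adj (.inr v) (.inl 0) := trivial

variable [Fintype V]

theorem sum_cone (f : Fin 1 ⊕ V → ℤ) : ∑ x, f x = f (.inl 0) + ∑ v, f (.inr v) := by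
  simp [Fintype.sum_sum_type]

theorem card_filter_cone (p : Fin 1 ⊕ V → Prop) [DecidablePred p] :
    #{x | p x} = (if p (.inl 0) then 1 else 0) + #{v | p (.inr v)} := by
  simp only [card_filter, Fintype.sum_sum_type, Fin.sum_univ_one]

theorem closedNbhdSum_cone_apex : closedNbhdSum (cone H) f (.inl 0) = ∑ x, f x := by
  rw [closedNbhdSum_join_inl, sum_cone]
  simp [closedNbhdSum, Fin.eq_zero]

theorem closedNbhdSum_cone_inr (v : V) :
    closedNbhdSum (cone H) f (.inr v) = f (.inl 0) + closedNbhdSum H (f ∘ .inr) v := by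
  simp [closedNbhdSum_join_inr]

theorem IsMRDF.card_add_one_le_of_sum_le_zero (hf : IsMRDF (cone H) f) (hsum : ∑ x, f x ≤ 0) :
    Fintype.card V + 1 ≤ 2 * #{v | 1 ≤ f (.inl 0) + closedNbhdSum H (f ∘ .inr) v} := by
  have apex_fails : ¬ 1 ≤ closedNbhdSum (cone H) f (.inl 0) := by
    rw [closedNbhdSum_cone_apex]
    omega
  have majority := hf.2.1
  rw [card_filter_cone, if_neg apex_fails, zero_add, Fintype.card_sum, Fintype.card_fin,
    add_comm] at majority
  simpa only [closedNbhdSum_cone_inr] using majority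

theorem IsMRDF.isRomanLabelling_inr (hf : IsMRDF (cone H) f) (hapex : f (.inl 0) ≠ 2) :
    IsRomanLabelling H (f ∘ .inr) := by
  refine ⟨fun v => hf.1 (.inr v), fun u hu => ?_⟩
  obtain ⟨w | w, huw, hw⟩ := hf.2.2 (.inr u) hu
  · exact absurd (Fin.eq_zero w ▸ hw) hapex
  · exact ⟨w, huw, hw⟩

variable [H.LocallyFinite]

theorem IsMRDF.sum_nonneg_of_apex_ne_two (hdeg : ∀ v, H.degree v ≤ 2) (hf : IsMRDF (cone H) f)
    (hapex : f (.inl 0) ≠ 2) : 0 ≤ ∑ x, f x := by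
  by_contra! hneg
  have hroman := hf.isRomanLabelling_inr hapex
  obtain ⟨v, hv⟩ : ({v | 1 ≤ f (.inl 0) + closedNbhdSum H (f ∘ .inr) v} : Finset V).Nonempty := by
    have := hf.card_add_one_le_of_sum_le_zero hneg.le
    exact card_pos.mp (by omega)
  simp only [mem_filter, mem_univ, true_and] at hv
  have nonneg := hroman.sum_nonneg hdeg
  rw [sum_cone] at hneg
  simp only [Function.comp_apply] at nonneg
  have apex_eq : f (.inl 0) = -1 := by
    have := hf.1 (.inl 0)
    omega
  have pos := hroman.sum_pos hdeg (v := v) (by omega)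
  simp only [Function.comp_apply] at pos
  omega

theorem IsMRDF.three_lt_card_add_sum_of_apex_ne_two (hdeg : ∀ v, H.degree v ≤ 2)
    (hcard : 3 ≤ Fintype.card V) (hf : IsMRDF (cone H) f) (hapex : f (.inl 0) ≠ 2) :
    3 < Fintype.card V + ∑ x, f x := by
  have sum_nonneg := hf.sum_nonneg_of_apex_ne_two hdeg hapex
  have roman_nonneg := (hf.isRomanLabelling_inr hapex).sum_nonneg hdeg
  have count := sum_add_card_eq_card_filter fun v => hf.1 (.inr v)
  rw [sum_cone] at sum_nonneg ⊢
  simp only [Function.comp_apply] at roman_nonneg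
  rcases hf.1 (.inl 0) with h | h | h
  · obtain ⟨w | w, -, hw⟩ := hf.2.2 (.inl 0) h
    · rw [Fin.eq_zero w, h] at hw
      omega
    · -- `card V = 3` and weight `0` would give `4 = 2 * a + b` with `1 ≤ b ≤ a`.
      have two_pos : 0 < #{v | f (.inr v) = 2} := card_pos.mpr ⟨w, by simpa using hw⟩
      have two_le : #{v | f (.inr v) = 2} ≤ #{v | f (.inr v) ≠ -1} :=
        card_le_card fun v => by simp +contextual
      omega
  · omega
  · exact absurd h hapex

theorem IsMRDF.card_add_one_le_card_dominated (hpos : ∀ v, 0 < H.degree v)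
    (hf : IsMRDF (cone H) f) (hsum : ∑ x, f x ≤ 0) (hapex : f (.inl 0) = 2) :
    Fintype.card V + 1 ≤ 2 * #(dominated H {v | f (.inr v) ≠ -1}) := by
  refine (hf.card_add_one_le_of_sum_le_zero hsum).trans (Nat.mul_le_mul_left 2 (card_le_card ?_))
  intro v hv
  by_contra hnot
  have := closedNbhdSum_eq_of_notMem_dominated (g := f ∘ .inr) hnot
  have := hpos v
  simp only [mem_filter, mem_univ, true_and] at hv
  omega

-- `(k + 6) / 6` is `⌈(k + 1) / 6⌉` in truncating division.
theorem le_mrdNum_cone (hcard : 3 ≤ Fintype.card V) (hpos : ∀ v, 0 < H.degree v)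
    (hdeg : ∀ v, H.degree v ≤ 2) :
    2 - (Fintype.card V : ℤ) + 2 * ((Fintype.card V + 6) / 6 : ℕ) ≤ mrdNum (cone H) := by
  refine le_mrdNum fun f hf => ?_
  by_cases hapex : f (.inl 0) = 2
  · rcases le_or_gt (∑ x, f x) 0 with hsum | hsum
    · have half := hf.card_add_one_le_card_dominated hpos hsum hapex
      have dominated_le := card_dominated_le (S := {v | f (.inr v) ≠ -1}) hdeg
      have count := sum_add_card_eq_card_filter fun v => hf.1 (.inr v)
      rw [sum_cone]
      omega
    · omega
  · have := hf.sum_nonneg_of_apex_ne_two hdeg hapex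
    have := hf.three_lt_card_add_sum_of_apex_ne_two hdeg hcard hapex
    omega

open Classical in
/-- The labelling of a cone with `2` at the apex, `1` on `S` and `-1` elsewhere. -/
noncomputable def coneLabelling (S : Finset V) : Fin 1 ⊕ V → ℤ :=
  Sum.elim (fun _ => 2) fun v => if v ∈ S then 1 else -1

theorem sum_coneLabelling (S : Finset V) :
    ∑ x, coneLabelling S x = 2 - Fintype.card V + 2 * #S := by
  classical
  have indicator (v : V) : (if v ∈ S then 1 else -1 : ℤ) = 2 * (if v ∈ S then 1 else 0) - 1 := by
    split_ifs <;> rfl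
  rw [sum_cone]
  simp only [coneLabelling, Sum.elim_inl, Sum.elim_inr, indicator, sum_sub_distrib, ← mul_sum,
    sum_boole, filter_mem_eq_inter, univ_inter, sum_const, card_univ, nsmul_one]
  ring

theorem isMRDF_coneLabelling {S : Finset V} (hdeg : ∀ v, H.degree v ≤ 2)
    (hS : Fintype.card V + 1 ≤ 2 * #(dominated H S)) : IsMRDF (cone H) (coneLabelling S) := by
  have value (v : V) : coneLabelling S (.inr v) = -1 ∨ coneLabelling S (.inr v) = 1 := by
    simp only [coneLabelling, Sum.elim_inr]
    split_ifs <;> simp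
  have neg_one_le (v : V) : -1 ≤ (coneLabelling S ∘ .inr) v := by
    rcases value v with h | h <;> simp [h]
  have dominated_le : #(dominated H S) ≤
      #{v | 1 ≤ closedNbhdSum (cone H) (coneLabelling S) (.inr v)} := by
    refine card_le_card fun v hv => ?_
    obtain ⟨u, huS, huv⟩ := mem_dominated.mp hv
    have bound := sub_degree_le_closedNbhdSum neg_one_le huv
    have := hdeg v
    simp only [mem_filter, mem_univ, true_and, closedNbhdSum_cone_inr]
    simp only [Function.comp_apply, coneLabelling, Sum.elim_inl, Sum.elim_inr, huS, if_true]
      at bound ⊢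
    omega
  refine ⟨?_, ?_, ?_⟩
  · rintro (a | v)
    · simp [coneLabelling]
    · exact (value v).imp_right .inl
  · rw [card_filter_cone, Fintype.card_sum, Fintype.card_fin]
    omega
  · rintro (a | v) h
    · simp [coneLabelling] at h
    · exact ⟨.inl 0, adj_cone_apex v, rfl⟩

theorem mrdNum_cone_le {S : Finset V} (hdeg : ∀ v, H.degree v ≤ 2)
    (hS : Fintype.card V + 1 ≤ 2 * #(dominated H S)) :
    mrdNum (cone H) ≤ 2 - Fintype.card V + 2 * #S :=
  sum_coneLabelling S ▸ mrdNum_le_sum (isMRDF_coneLabelling hdeg hS)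

end Cone

section Path

open SimpleGraph

variable {m : ℕ}

theorem exists_card_le_dominated_pathGraph {k : ℕ} (hk : 3 * k ≤ m) :
    ∃ S : Finset (Fin m), #S ≤ k ∧ 3 * k ≤ #(dominated (pathGraph m) S) := by
  let center (t : Fin k) : Fin m := ⟨3 * t + 1, by omega⟩
  refine ⟨univ.image center, card_image_le.trans (card_fin k).le, ?_⟩
  have initial_subset :
      univ.image (Fin.castLE hk) ⊆ dominated (pathGraph m) (univ.image center) := by
    intro v hv
    obtain ⟨i, -, rfl⟩ := mem_image.mp hv
    refine mem_dominated.mpr ⟨center ⟨i / 3, by omega⟩, by simp, ?_⟩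
    simp only [mem_closedNbhd, pathGraph_adj, Fin.ext_iff, Fin.val_castLE, center]
    omega
  calc 3 * k = #(univ.image (Fin.castLE hk)) := by
        rw [card_image_of_injective _ (Fin.castLE_injective hk), card_fin]
    _ ≤ _ := card_le_card initial_subset

theorem mrdNum_cone_eq_of_pathGraph_le {H : SimpleGraph (Fin m)} [H.LocallyFinite] (hm : 3 ≤ m)
    (hpath : pathGraph m ≤ H) (hdeg : ∀ v, H.degree v ≤ 2) :
    mrdNum (cone H) = 2 - m + 2 * ((m + 6) / 6 : ℕ) := by
  apply le_antisymm
  · obtain ⟨S, hcard, hdom⟩ :=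
      exists_card_le_dominated_pathGraph (show 3 * ((m + 6) / 6) ≤ m by omega)
    have hdom' := hdom.trans (card_le_card (dominated_mono hpath))
    have := mrdNum_cone_le (S := S) hdeg (by rw [Fintype.card_fin]; omega)
    rw [Fintype.card_fin] at this
    omega
  · have : Nontrivial (Fin m) := Fin.nontrivial_iff_two_le.mpr (by omega)
    have hpos (v) : 0 < H.degree v :=
      ((pathGraph_preconnected m).mono hpath).degree_pos_of_nontrivial v
    simpa using le_mrdNum_cone (by simpa using hm) hpos hdeg

end Path

end MRD

/-- For `n ≥ 4`, the fan `F_n = K_1 ∨ P_{n-1}` and the wheel `W_n = K_1 ∨ C_{n-1}`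
have the same majority Roman domination number. -/
theorem mrdNum_fan_eq_wheel (n : ℕ) (hn : 4 ≤ n) :
    MRD.mrdNum (MRD.join (⊤ : SimpleGraph (Fin 1)) (SimpleGraph.pathGraph (n - 1))) =
      MRD.mrdNum (MRD.join (⊤ : SimpleGraph (Fin 1)) (SimpleGraph.cycleGraph (n - 1))) := by
  classical
  obtain ⟨r, rfl⟩ : ∃ r, n = r + 4 := ⟨n - 4, by omega⟩
  have degree_cycle (v) : (SimpleGraph.cycleGraph (r + 3)).degree v ≤ 2 :=
    SimpleGraph.cycleGraph_degree_three_le.le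
  have degree_path (v) : (SimpleGraph.pathGraph (r + 3)).degree v ≤ 2 :=
    ((SimpleGraph.Copy.ofLE _ _ SimpleGraph.pathGraph_le_cycleGraph).degree_le v).trans
      (degree_cycle v)
  exact (MRD.mrdNum_cone_eq_of_pathGraph_le (by omega) le_rfl degree_path).trans
    (MRD.mrdNum_cone_eq_of_pathGraph_le (by omega) SimpleGraph.pathGraph_le_cycleGraph
      degree_cycle).symm
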